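/- Let d ≥ 1 be an integer, p ∈ [1, ∞], and f ∈ L¹(ℝ^d), and set M₁(f) = ∫_{ℝ^d} f(x) dx. Then lim_{t→∞} ‖k_t ⋆ f − M₁(f) · k_t‖_{L^p(ℝ^d)} / ‖k_t‖_{L^p(ℝ^d)} = 0, where k_t ⋆ f denotes convolution; equivalently, (4πt)^{d/(2p')} ‖k_t ⋆ f − M₁(f) k_t‖_{L^p(ℝ^d)} → 0 as t → ∞. (This is the classical Euclidean heat-asymptotic theorem stated in the introduction of the paper, whose non-Archimedean analogue is the paper's main result.) -/

import Mathlib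

open MeasureTheory
open scoped ENNReal

/-- The Euclidean heat kernel `k_t(x) = (4πt)^{−d/2} exp(−‖x‖²/(4t))` on `ℝ^d`. -/
noncomputable def euclideanHeatKernel (d : ℕ) (t : ℝ) (x : EuclideanSpace ℝ (Fin d)) : ℝ :=
  (4 * Real.pi * t) ^ (-(d : ℝ) / 2) * Real.exp (-‖x‖ ^ 2 / (4 * t))

lemma exp_lip (s r : ℝ) : |Real.exp (-s^2/2) - Real.exp (-r^2/2)| ≤ |s - r| := by
  have h := Convex.norm_image_sub_le_of_norm_hasDerivWithin_le (𝕜 := ℝ) (s := Set.univ)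
    (f := fun u : ℝ => Real.exp (-u^2/2)) (f' := fun u => Real.exp (-u^2/2) * (-u)) (C := 1)
    (x := r) (y := s) ?_ ?_ convex_univ (Set.mem_univ _) (Set.mem_univ _)
  · simpa using h
  · intro u _
    have : HasDerivAt (fun u : ℝ => -u^2/2) (-u) u := by
      have := ((hasDerivAt_pow 2 u).neg).div_const 2
      refine this.congr_deriv ?_
      norm_num; ring
    exact this.exp.hasDerivWithinAt
  · intro u _
    have h1 : Real.exp (-u^2/2) * Real.exp (u^2/2) = 1 := by
      rw [← Real.exp_add]; simp; ring
    have h2 := Real.add_one_le_exp (u^2/2)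
    have h3 : |u| ≤ Real.exp (u^2/2) := by nlinarith [sq_abs u, sq_nonneg (|u| - 1)]
    rw [Real.norm_eq_abs, abs_mul, abs_neg, Real.abs_exp, ← h1]
    gcongr

lemma kernel_diff (d : ℕ) (t : ℝ) (ht : 0 < t) (x y : EuclideanSpace ℝ (Fin d)) :
    |euclideanHeatKernel d t (x - y) - euclideanHeatKernel d t x| ≤
      (4 * Real.pi * t) ^ (-(d : ℝ) / 2) * (min 1 (‖y‖ / √t) *
        (Real.exp (-(1/(8*t)) * ‖x - y‖^2) + Real.exp (-(1/(8*t)) * ‖x‖^2))) := by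
  have hs : 0 < √t := Real.sqrt_pos.2 ht
  have hss : √t ^ 2 = t := Real.sq_sqrt ht.le
  unfold euclideanHeatKernel
  rw [← mul_sub, abs_mul, abs_of_nonneg (by positivity)]
  gcongr
  have key : ∀ a : ℝ, Real.exp (-a^2/(4*t)) = Real.exp (-(a/(2*√t))^2/2)^2 ∧
      Real.exp (-(1/(8*t)) * a^2) = Real.exp (-(a/(2*√t))^2/2) := by
    intro a
    constructor
    · rw [← Real.exp_nat_mul]; congr 1; rw [div_pow, mul_pow, hss]; push_cast; field_simp; norm_num
    · congr 1; rw [div_pow, mul_pow, hss]; field_simp; ring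
  rw [(key _).1, (key _).1, (key _).2, (key _).2]
  have hl := exp_lip (‖x - y‖/(2*√t)) (‖x‖/(2*√t))
  have h0 : ∀ a : ℝ, 0 < Real.exp (-(a/(2*√t))^2/2) ∧ Real.exp (-(a/(2*√t))^2/2) ≤ 1 := fun a =>
    ⟨Real.exp_pos _, Real.exp_le_one_iff.2 (by nlinarith [sq_nonneg (a/(2*√t))])⟩
  obtain ⟨a0, a1⟩ := h0 ‖x - y‖
  obtain ⟨b0, b1⟩ := h0 ‖x‖
  have hd : |‖x - y‖/(2*√t) - ‖x‖/(2*√t)| ≤ ‖y‖ / √t := by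
    rw [← sub_div, abs_div, abs_of_pos (by positivity : 0 < 2 * √t)]
    have := abs_norm_sub_norm_le (x - y) x
    simp at this
    rw [div_le_div_iff₀ (by positivity) hs]
    nlinarith [norm_nonneg y, mul_le_mul_of_nonneg_right this hs.le, mul_nonneg (norm_nonneg y) hs.le]
  generalize Real.exp (-(‖x - y‖/(2*√t))^2/2) = a at *
  generalize Real.exp (-(‖x‖/(2*√t))^2/2) = b at *
  rw [sq_sub_sq, abs_mul, mul_comm, abs_of_pos (by positivity : 0 < a + b)]
  gcongr
  refine le_min ?_ (hl.trans hd)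
  rw [abs_le]; constructor <;> linarith

lemma lint_gauss (d : ℕ) (b : ℝ) (hb : 0 < b) :
    ∫⁻ x : EuclideanSpace ℝ (Fin d), ENNReal.ofReal (Real.exp (-b * ‖x‖^2)) =
      ENNReal.ofReal ((Real.pi / b) ^ ((d:ℝ)/2)) := by
  have h := GaussianFourier.integral_rexp_neg_mul_sq_norm (V := EuclideanSpace ℝ (Fin d)) hb
  have hi : Integrable fun v : EuclideanSpace ℝ (Fin d) => Real.exp (-b * ‖v‖^2) := by
    by_contra hn
    rw [integral_undef hn] at h
    have : 0 < (Real.pi / b) ^ ((Module.finrank ℝ (EuclideanSpace ℝ (Fin d)) : ℝ) / 2) := by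
      positivity
    exact this.ne h
  rw [← ofReal_integral_eq_lintegral_ofReal hi (Filter.Eventually.of_forall fun x => (Real.exp_pos _).le), h]
  simp

noncomputable def epsHK (d : ℕ) (f : EuclideanSpace ℝ (Fin d) → ℝ) (t : ℝ) : ℝ≥0∞ :=
  ∫⁻ y, ENNReal.ofReal (min 1 (‖y‖ / √t)) * ‖f y‖ₑ

lemma eps_le (d : ℕ) (f : EuclideanSpace ℝ (Fin d) → ℝ) (t : ℝ) :
    epsHK d f t ≤ ∫⁻ y, ‖f y‖ₑ := by
  apply lintegral_mono
  intro y
  calc ENNReal.ofReal (min 1 (‖y‖ / √t)) * ‖f y‖ₑ ≤ ENNReal.ofReal 1 * ‖f y‖ₑ := by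
        gcongr; exact min_le_left _ _
    _ = _ := by simp

lemma eps_tendsto (d : ℕ) (f : EuclideanSpace ℝ (Fin d) → ℝ) (hf : Integrable f) :
    Filter.Tendsto (epsHK d f) Filter.atTop (nhds 0) := by
  have : (0:ℝ≥0∞) = ∫⁻ y : EuclideanSpace ℝ (Fin d), 0 := by simp
  rw [this]
  apply tendsto_lintegral_filter_of_dominated_convergence' (fun y => ‖f y‖ₑ)
  · refine Filter.Eventually.of_forall fun t => ?_
    refine AEMeasurable.mul ?_ hf.1.enorm
    exact (by fun_prop : Measurable _).aemeasurable
  · refine Filter.Eventually.of_forall fun t => Filter.Eventually.of_forall fun y => ?_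
    calc _ ≤ ENNReal.ofReal 1 * ‖f y‖ₑ := by gcongr; exact min_le_left _ _
      _ = _ := by simp
  · exact hf.2.ne
  · refine Filter.Eventually.of_forall fun y => ?_
    have h1 : Filter.Tendsto (fun t : ℝ => min 1 (‖y‖ / √t)) Filter.atTop (nhds 0) := by
      have := (tendsto_const_nhds (x := (1:ℝ))).min
        ((tendsto_const_nhds (x := ‖y‖)).div_atTop Real.tendsto_sqrt_atTop)
      simpa using this
    have h2 := ENNReal.tendsto_ofReal h1
    have h3 := ENNReal.Tendsto.mul_const (b := ‖f y‖ₑ) h2 (Or.inr enorm_ne_top)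
    simpa using h3

lemma kernel_cont (d : ℕ) (t : ℝ) : Continuous (euclideanHeatKernel d t) := by
  unfold euclideanHeatKernel; fun_prop

lemma diff_bound (d : ℕ) (t : ℝ) (ht : 0 < t)
    (f : EuclideanSpace ℝ (Fin d) → ℝ) (hf : Integrable f) (x : EuclideanSpace ℝ (Fin d)) :
    ‖(∫ y, euclideanHeatKernel d t (x - y) * f y) - (∫ y, f y) * euclideanHeatKernel d t x‖ₑ ≤
    ENNReal.ofReal ((4 * Real.pi * t) ^ (-(d : ℝ) / 2)) *
      ∫⁻ y, ENNReal.ofReal (min 1 (‖y‖ / √t)) * ‖f y‖ₑ *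
        (ENNReal.ofReal (Real.exp (-(1/(8*t)) * ‖x - y‖^2)) +
          ENNReal.ofReal (Real.exp (-(1/(8*t)) * ‖x‖^2))) := by
  have hi : Integrable fun y => euclideanHeatKernel d t (x - y) * f y := by
    refine hf.bdd_mul (c := (4 * Real.pi * t) ^ (-(d : ℝ) / 2)) ?_ ?_
    · exact ((kernel_cont d t).comp (by fun_prop)).aestronglyMeasurable
    · refine Filter.Eventually.of_forall fun y => ?_
      unfold euclideanHeatKernel
      rw [Real.norm_eq_abs, abs_of_nonneg (by positivity)]
      refine mul_le_of_le_one_right (by positivity) (Real.exp_le_one_iff.2 ?_)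
      rw [neg_div]; simp; positivity
  rw [← integral_mul_const, ← integral_sub hi (hf.mul_const _)]
  refine (enorm_integral_le_lintegral_enorm _).trans ?_
  rw [← lintegral_const_mul' _ _ ENNReal.ofReal_ne_top]
  refine lintegral_mono fun y => ?_
  have : euclideanHeatKernel d t (x - y) * f y - f y * euclideanHeatKernel d t x =
    (euclideanHeatKernel d t (x - y) - euclideanHeatKernel d t x) * f y := by ring
  rw [this, enorm_mul, Real.enorm_eq_ofReal_abs]
  calc _ ≤ _ := mul_le_mul_left (ENNReal.ofReal_le_ofReal (kernel_diff d t ht x y)) _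
    _ = _ := by
      rw [ENNReal.ofReal_mul (by positivity), ENNReal.ofReal_mul (by positivity),
        ENNReal.ofReal_add (by positivity) (by positivity)]
      ring

lemma sup_bound (d : ℕ) (t : ℝ) (ht : 0 < t)
    (f : EuclideanSpace ℝ (Fin d) → ℝ) (hf : Integrable f) (x : EuclideanSpace ℝ (Fin d)) :
    ‖(∫ y, euclideanHeatKernel d t (x - y) * f y) - (∫ y, f y) * euclideanHeatKernel d t x‖ₑ ≤
    ENNReal.ofReal ((4 * Real.pi * t) ^ (-(d : ℝ) / 2)) * (epsHK d f t * 2) := by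
  refine (diff_bound d t ht f hf x).trans ?_
  unfold epsHK
  rw [← lintegral_mul_const' _ _ (by simp)]
  gcongr with y
  have h : ∀ z : EuclideanSpace ℝ (Fin d),
      ENNReal.ofReal (Real.exp (-(1/(8*t)) * ‖z‖^2)) ≤ 1 := by
    intro z
    rw [ENNReal.ofReal_le_one, Real.exp_le_one_iff, neg_mul]; simp; positivity
  calc _ ≤ (1:ℝ≥0∞) + 1 := add_le_add (h _) (h _)
    _ = 2 := by norm_num

lemma one_bound (d : ℕ) (t : ℝ) (ht : 0 < t)
    (f : EuclideanSpace ℝ (Fin d) → ℝ) (hf : Integrable f) :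
    ∫⁻ x, ‖(∫ y, euclideanHeatKernel d t (x - y) * f y) - (∫ y, f y) * euclideanHeatKernel d t x‖ₑ ≤
    ENNReal.ofReal (2 * 2 ^ ((d:ℝ)/2)) * epsHK d f t := by
  refine (lintegral_mono fun x => diff_bound d t ht f hf x).trans ?_
  rw [lintegral_const_mul' _ _ ENNReal.ofReal_ne_top, lintegral_lintegral_swap]
  · have : ∀ y : EuclideanSpace ℝ (Fin d), ∫⁻ x : EuclideanSpace ℝ (Fin d),
        ENNReal.ofReal (min 1 (‖y‖ / √t)) * ‖f y‖ₑ *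
        (ENNReal.ofReal (Real.exp (-(1/(8*t)) * ‖x - y‖^2)) +
          ENNReal.ofReal (Real.exp (-(1/(8*t)) * ‖x‖^2))) =
        ENNReal.ofReal (min 1 (‖y‖ / √t)) * ‖f y‖ₑ *
          ENNReal.ofReal (2 * (8 * Real.pi * t) ^ ((d:ℝ)/2)) := by
      intro y
      rw [lintegral_const_mul' _ _ (ENNReal.mul_ne_top ENNReal.ofReal_ne_top enorm_ne_top),
        lintegral_add_left (by fun_prop),
        lintegral_sub_right_eq_self (fun x : EuclideanSpace ℝ (Fin d) =>
          ENNReal.ofReal (Real.exp (-(1/(8*t)) * ‖x‖^2))) y,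
        lint_gauss d _ (by positivity), ← ENNReal.ofReal_add (by positivity) (by positivity),
        ← two_mul]
      congr 4; field_simp
    simp_rw [this]
    rw [lintegral_mul_const' _ _ ENNReal.ofReal_ne_top, mul_comm, mul_assoc,
      ← ENNReal.ofReal_mul (by positivity), mul_comm]
    apply le_of_eq
    unfold epsHK
    congr 2
    have h8 : 8 * Real.pi * t = 2 * (4 * Real.pi * t) := by ring
    have hp : (0:ℝ) < 4 * Real.pi * t := by positivity
    rw [h8, Real.mul_rpow (by norm_num) hp.le, neg_div, Real.rpow_neg hp.le]
    field_simp
  · refine AEMeasurable.mul (M := ℝ≥0∞) (AEMeasurable.mul (M := ℝ≥0∞) ?_ ?_) ?_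
    · exact (by fun_prop : Measurable _).aemeasurable
    · exact (hf.1.enorm).comp_snd
    · exact (by fun_prop : Measurable _).aemeasurable

lemma kernel_pow (d : ℕ) (t : ℝ) (ht : 0 < t) (q : ℝ) (hq : 1 ≤ q) :
    ∫⁻ x, ‖euclideanHeatKernel d t x‖ₑ ^ q =
      ENNReal.ofReal ((4 * Real.pi * t) ^ (-(d : ℝ) / 2)) ^ (q - 1) *
        ENNReal.ofReal (q ^ (-(d:ℝ)/2)) := by
  have hq0 : 0 < q := by linarith
  have hp : (0:ℝ) < 4 * Real.pi * t := by positivity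
  have : ∀ x, ‖euclideanHeatKernel d t x‖ₑ ^ q =
      ENNReal.ofReal (((4 * Real.pi * t) ^ (-(d : ℝ) / 2)) ^ q) *
        ENNReal.ofReal (Real.exp (-(q/(4*t)) * ‖x‖^2)) := by
    intro x
    rw [← ENNReal.ofReal_mul (by positivity)]
    unfold euclideanHeatKernel
    rw [Real.enorm_eq_ofReal_abs, abs_of_nonneg (by positivity),
      ENNReal.ofReal_rpow_of_nonneg (by positivity) (by positivity),
      Real.mul_rpow (by positivity) (by positivity), ← Real.exp_mul]
    congr 3; field_simp
  simp_rw [this]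
  rw [lintegral_const_mul' _ _ ENNReal.ofReal_ne_top, lint_gauss d _ (by positivity),
    ENNReal.ofReal_rpow_of_nonneg (by positivity) (by linarith),
    ← ENNReal.ofReal_mul (by positivity), ← ENNReal.ofReal_mul (by positivity)]
  congr 1
  have h4 : Real.pi / (q/(4*t)) = (4 * Real.pi * t) / q := by field_simp
  rw [h4, Real.div_rpow hp.le hq0.le, Real.rpow_sub_one (by positivity), neg_div,
    Real.rpow_neg hp.le, Real.rpow_neg hq0.le]
  field_simp

lemma kernel_top (d : ℕ) (t : ℝ) (ht : 0 < t) :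
    ENNReal.ofReal ((4 * Real.pi * t) ^ (-(d : ℝ) / 2)) ≤
      eLpNorm (euclideanHeatKernel d t) ∞ volume := by
  rw [eLpNorm_exponent_top]
  have h := enorm_ae_le_eLpNormEssSup (euclideanHeatKernel d t) volume
  by_contra! hlt
  have hc : Continuous fun x => ‖euclideanHeatKernel d t x‖ₑ := (kernel_cont d t).enorm
  have ho := hc.isOpen_preimage _ (isOpen_Ioi (a := eLpNormEssSup (euclideanHeatKernel d t) volume))
  have h0 : (0 : EuclideanSpace ℝ (Fin d)) ∈ (fun x => ‖euclideanHeatKernel d t x‖ₑ) ⁻¹'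
      (Set.Ioi (eLpNormEssSup (euclideanHeatKernel d t) volume)) := by
    simp only [Set.mem_preimage, Set.mem_Ioi]
    refine hlt.trans_eq ?_
    unfold euclideanHeatKernel
    rw [Real.enorm_eq_ofReal_abs, abs_of_nonneg (by positivity)]
    simp
  have hpos := ho.measure_pos volume ⟨0, h0⟩
  rw [ae_iff] at h
  simp only [not_le] at h
  exact hpos.ne' h

lemma main_bound (d : ℕ) (p : ℝ≥0∞) (hp : 1 ≤ p) : ∃ K : ℝ≥0∞, K ≠ ∞ ∧
    ∀ (f : EuclideanSpace ℝ (Fin d) → ℝ) (_ : Integrable f) (t : ℝ) (_ : 0 < t),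
      eLpNorm (fun x => (∫ y, euclideanHeatKernel d t (x - y) * f y) -
              (∫ y, f y) * euclideanHeatKernel d t x) p volume ≤
      K * epsHK d f t * eLpNorm (euclideanHeatKernel d t) p volume := by
  by_cases hpt : p = ∞
  · subst hpt
    refine ⟨2, by simp, fun f hf t ht => ?_⟩
    rw [eLpNorm_exponent_top]
    refine (eLpNormEssSup_le_of_ae_enorm_bound
      (Filter.Eventually.of_forall (sup_bound d t ht f hf))).trans ?_
    rw [mul_comm, mul_comm 2]
    gcongr
    exact kernel_top d t ht
  have hp0 : p ≠ 0 := (zero_lt_one.trans_le hp).ne'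
  obtain ⟨q, rfl⟩ : ∃ q : ℝ, p = ENNReal.ofReal q := ⟨p.toReal, (ENNReal.ofReal_toReal hpt).symm⟩
  have hq : 1 ≤ q := by simpa using hp
  have hq0 : 0 < q := by linarith
  refine ⟨(2 ^ (q - 1) * ENNReal.ofReal (2 * 2 ^ ((d:ℝ)/2)) * ENNReal.ofReal (q ^ ((d:ℝ)/2))) ^ (1/q),
    ?_, fun f hf t ht => ?_⟩
  · refine ENNReal.rpow_ne_top_of_nonneg (by positivity) ?_
    refine ENNReal.mul_ne_top (ENNReal.mul_ne_top ?_ ENNReal.ofReal_ne_top) ENNReal.ofReal_ne_top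
    exact ENNReal.rpow_ne_top_of_nonneg (by linarith) (by simp)
  rw [eLpNorm_eq_lintegral_rpow_enorm_toReal hp0 hpt, eLpNorm_eq_lintegral_rpow_enorm_toReal hp0 hpt,
    ENNReal.toReal_ofReal hq0.le]
  have he : epsHK d f t = (epsHK d f t ^ q) ^ (1/q) := by
    rw [← ENNReal.rpow_mul]; simp [hq0.ne']
  have het : epsHK d f t ≠ ∞ := ((eps_le d f t).trans_lt hf.2).ne
  rw [he, ← ENNReal.mul_rpow_of_nonneg _ _ (by positivity),
    ← ENNReal.mul_rpow_of_nonneg _ _ (by positivity)]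
  refine ENNReal.rpow_le_rpow ?_ (by positivity)
  rw [kernel_pow d t ht q hq]
  set A := ENNReal.ofReal ((4 * Real.pi * t) ^ (-(d : ℝ) / 2)) with hA
  set e := epsHK d f t with hee
  have hsplit : ∀ a : ℝ≥0∞, a ^ q = a ^ (q - 1) * a := by
    intro a
    conv_lhs => rw [show q = (q - 1) + 1 by ring,
      ENNReal.rpow_add_of_nonneg _ _ (by linarith) zero_le_one, ENNReal.rpow_one]
  have h1 : ∫⁻ x, ‖(∫ y, euclideanHeatKernel d t (x - y) * f y) -
      (∫ y, f y) * euclideanHeatKernel d t x‖ₑ ^ q ≤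
      ∫⁻ x, (A * (e * 2)) ^ (q - 1) * ‖(∫ y, euclideanHeatKernel d t (x - y) * f y) -
      (∫ y, f y) * euclideanHeatKernel d t x‖ₑ := by
    refine lintegral_mono fun x => ?_
    rw [hsplit]
    gcongr
    exact sup_bound d t ht f hf x
  refine h1.trans ?_
  rw [lintegral_const_mul' _ _ (ENNReal.rpow_ne_top_of_nonneg (by linarith)
    (ENNReal.mul_ne_top ENNReal.ofReal_ne_top (ENNReal.mul_ne_top het (by simp))))]
  refine (mul_le_mul_right (one_bound d t ht f hf) _).trans ?_
  have hqq : ENNReal.ofReal (q ^ ((d:ℝ)/2)) * ENNReal.ofReal (q ^ (-(d:ℝ)/2)) = 1 := by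
    rw [← ENNReal.ofReal_mul (by positivity), ← Real.rpow_add hq0, neg_div]; simp
  rw [ENNReal.mul_rpow_of_nonneg _ _ (by linarith), ENNReal.mul_rpow_of_nonneg _ _ (by linarith),
    hsplit e, ← hee]
  apply le_of_eq
  calc _ = (2 ^ (q - 1) * ENNReal.ofReal (2 * 2 ^ ((d:ℝ)/2))) * (e ^ (q-1) * e) * A ^ (q-1) * 1 := by
        ring
    _ = _ := by rw [← hqq]; ring

/-- The classical Euclidean heat asymptotic: for `f ∈ L¹(ℝ^d)` with mass
`M₁(f) = ∫ f`, and every `p ∈ [1, ∞]`,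
`‖k_t ⋆ f − M₁(f) k_t‖_{L^p} / ‖k_t‖_{L^p} → 0` as `t → ∞`. -/
theorem stmt_8 (d : ℕ) (hd : 1 ≤ d) (p : ℝ≥0∞) (hp : 1 ≤ p)
    (f : EuclideanSpace ℝ (Fin d) → ℝ) (hf : Integrable f) :
    Filter.Tendsto
      (fun t : ℝ =>
        eLpNorm
            (fun x => (∫ y, euclideanHeatKernel d t (x - y) * f y) -
              (∫ y, f y) * euclideanHeatKernel d t x) p volume /
          eLpNorm (euclideanHeatKernel d t) p volume)
      Filter.atTop (nhds 0) := by
  obtain ⟨K, hK, h⟩ := main_bound d p hp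
  have h1 := ENNReal.Tendsto.const_mul (a := K) (eps_tendsto d f hf) (Or.inr hK)
  rw [mul_zero] at h1
  refine tendsto_of_tendsto_of_tendsto_of_le_of_le' tendsto_const_nhds h1
    (Filter.Eventually.of_forall fun t => zero_le) ?_
  filter_upwards [Filter.eventually_gt_atTop 0] with t ht
  exact ENNReal.div_le_of_le_mul (h f hf t ht)
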